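/- Fix a load vector x with x_j > 0 for all j and F(x) ≠ ∅, and suppose X* ∈ F(x) is a global minimizer of 𝒞 over F(x). Let λ_1,…,λ_Q be reals such that for every j: F_j^i(X*) = λ_j whenever x*_j^i > 0, and F_j^i(X*) ≥ λ_j for all i (such λ exist by the Wardrop property of minimizers). Then λ is a subgradient of the minimum system cost: for every load vector y with y_j > 0 for all j and F(y) ≠ ∅, 𝒞*(y) ≥ 𝒞*(x) + Σ_{j=1}^Q λ_j (y_j − x_j). -/

import Mathlib

open Finset Set

/-- The feasible domain Ω: all entries nonnegative and each column sum below capacity. -/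
def feasible {Q : ℕ} (C : Fin Q → ℝ) : Set (Fin Q → Fin Q → ℝ) :=
  {X | (∀ j i, 0 ≤ X j i) ∧ ∀ i, (∑ l, X l i) < C i}

/-- The total system cost 𝒞(X). -/
noncomputable def cost {Q : ℕ} (C : Fin Q → ℝ) (p : Fin Q → Fin Q → ℝ)
    (X : Fin Q → Fin Q → ℝ) : ℝ :=
  ∑ i, ((∑ r, X r i) / (C i - ∑ l, X l i) + ∑ r, p r i * X r i)

/-- The payoff F_j^i(X) of option i to mTracker j. -/
noncomputable def payoff {Q : ℕ} (C : Fin Q → ℝ) (p : Fin Q → Fin Q → ℝ)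
    (X : Fin Q → Fin Q → ℝ) (j i : Fin Q) : ℝ :=
  1 / (C i - ∑ l, X l i) + p j i + (∑ l, X l i) / (C i - ∑ l, X l i) ^ 2

/-- The feasible set F(x) of states in Ω whose row sums match the load vector x. -/
def feasLoad {Q : ℕ} (C : Fin Q → ℝ) (x : Fin Q → ℝ) : Set (Fin Q → Fin Q → ℝ) :=
  {X | X ∈ feasible C ∧ ∀ j, (∑ i, X j i) = x j}

/-- The minimum achievable system cost for a load vector x. -/
noncomputable def minCost {Q : ℕ} (C : Fin Q → ℝ) (p : Fin Q → Fin Q → ℝ)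
    (x : Fin Q → ℝ) : ℝ :=
  sInf (cost C p '' feasLoad C x)

/-- The congestion cost `s / (c - s)` lies above its tangents on `s < c`. -/
theorem congestion_tangent_le {c s t : ℝ} (hc : 0 < c) (hs : s < c) (ht : t < c) :
    s / (c - s) + (1 / (c - s) + s / (c - s) ^ 2) * (t - s) ≤ t / (c - t) := by
  have hs' : 0 < c - s := sub_pos.2 hs
  have ht' : 0 < c - t := sub_pos.2 ht
  have gap : t / (c - t) - (s / (c - s) + (1 / (c - s) + s / (c - s) ^ 2) * (t - s))
      = c * (t - s) ^ 2 / ((c - t) * (c - s) ^ 2) := by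
    field_simp
    ring
  have : 0 ≤ c * (t - s) ^ 2 / ((c - t) * (c - s) ^ 2) := by positivity
  linarith

/-- First-order convexity inequality for the cost, whose partial derivatives are the payoffs. -/
theorem cost_add_sum_payoff_le {Q : ℕ} {C : Fin Q → ℝ} (hC : ∀ i, 0 < C i)
    (p : Fin Q → Fin Q → ℝ) {X Y : Fin Q → Fin Q → ℝ}
    (hX : X ∈ feasible C) (hY : Y ∈ feasible C) :
    cost C p X + ∑ i, ∑ j, payoff C p X j i * (Y j i - X j i) ≤ cost C p Y := by
  unfold cost
  rw [← Finset.sum_add_distrib]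
  refine Finset.sum_le_sum fun i _ => ?_
  have tangent := congestion_tangent_le (hC i) (hX.2 i) (hY.2 i)
  have expand : ∑ j, payoff C p X j i * (Y j i - X j i)
      = (1 / (C i - ∑ l, X l i) + (∑ l, X l i) / (C i - ∑ l, X l i) ^ 2)
          * (∑ l, Y l i - ∑ l, X l i) + (∑ r, p r i * Y r i - ∑ r, p r i * X r i) := by
    rw [← Finset.sum_sub_distrib, ← Finset.sum_sub_distrib, Finset.mul_sum,
      ← Finset.sum_add_distrib]
    refine Finset.sum_congr rfl fun j _ => ?_
    unfold payoff
    ring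
  linarith

/-- The common Wardrop payoffs λ_j at a global minimizer X* of the cost over F(x)
form a subgradient of the minimum system cost function 𝒞* at x. -/
theorem wardrop_payoffs_subgradient (Q : ℕ) (hQ : 1 ≤ Q)
    (C : Fin Q → ℝ) (hC : ∀ i, 0 < C i)
    (p : Fin Q → Fin Q → ℝ) (hp : ∀ j i, 0 ≤ p j i)
    (x : Fin Q → ℝ) (hx : ∀ j, 0 < x j)
    (Xs : Fin Q → Fin Q → ℝ) (hXs : Xs ∈ feasLoad C x)
    (hmin : ∀ Y ∈ feasLoad C x, cost C p Xs ≤ cost C p Y)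
    (lam : Fin Q → ℝ)
    (hlam1 : ∀ j i, 0 < Xs j i → payoff C p Xs j i = lam j)
    (hlam2 : ∀ j i, lam j ≤ payoff C p Xs j i)
    (y : Fin Q → ℝ) (hy : ∀ j, 0 < y j) (hyne : (feasLoad C y).Nonempty) :
    minCost C p x + ∑ j, lam j * (y j - x j) ≤ minCost C p y := by
  have minCost_x : minCost C p x = cost C p Xs :=
    IsLeast.csInf_eq ⟨Set.mem_image_of_mem _ hXs, Set.forall_mem_image.2 hmin⟩
  rw [minCost_x]
  refine le_csInf (hyne.image _) (Set.forall_mem_image.2 fun Y hY => ?_)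
  refine le_trans ?_ (cost_add_sum_payoff_le hC p hXs.1 hY.1)
  rw [Finset.sum_comm]
  gcongr with j
  rw [← hY.2 j, ← hXs.2 j, ← Finset.sum_sub_distrib, Finset.mul_sum]
  refine Finset.sum_le_sum fun i _ => ?_
  rcases (hXs.1.1 j i).eq_or_lt with h | h
  · rw [← h, sub_zero]
    exact mul_le_mul_of_nonneg_right (hlam2 j i) (hY.1.1 j i)
  · rw [hlam1 j i h]
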